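/- arXiv:math/0411598 — 2 statements merged into one kernel-verified Lean document; each statement's English description precedes it below -/
import Mathlib

section
/- Let n ≥ 1, m = 2n, and let C ∈ ℂ^{2n×4n} be a normalized system of boundary conditions of rank 2n that is dissipative. For each j ∈ {0, 1, …, 2n−1} let r_j denote the number of rows of C of order j. Then r_j + r_{2n−1−j} = 2 for every j ∈ {0, 1, …, 2n−1}. -/
open ComplexOrder

/-- A system of boundary conditions of order `2n` is a matrix `C ∈ ℂ^{2n×4n}`; we index
the `4n` columns by `Fin (2n) ⊕ Fin (2n)`: `Sum.inl k` is the coefficient of `y^{(k)}(0)`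
and `Sum.inr k` that of `y^{(k)}(1)`.  The order of row `j` is the largest `k` with
`(C_{j,k}, C_{j,2n+k}) ≠ (0,0)`. -/
noncomputable def rowOrder {m : ℕ} (C : Matrix (Fin m) (Fin m ⊕ Fin m) ℂ) (j : Fin m) : ℕ :=
  sSup {k : ℕ | ∃ h : k < m, C j (Sum.inl ⟨k, h⟩) ≠ 0 ∨ C j (Sum.inr ⟨k, h⟩) ≠ 0}

/-- The leading pair `(α_j, β_j) = (C_{j,k_j}, C_{j,m+k_j})` of row `j`. -/
noncomputable def leadingPair {m : ℕ} (C : Matrix (Fin m) (Fin m ⊕ Fin m) ℂ) (j : Fin m) :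
    ℂ × ℂ :=
  if h : rowOrder C j < m then
    (C j (Sum.inl ⟨rowOrder C j, h⟩), C j (Sum.inr ⟨rowOrder C j, h⟩))
  else 0

/-- The system `C` is normalized if, for every value `k`, the leading pairs of the rows
of order `k` are linearly independent in `ℂ²`. -/
def IsNormalized {m : ℕ} (C : Matrix (Fin m) (Fin m ⊕ Fin m) ℂ) : Prop :=
  ∀ k : ℕ, LinearIndependent ℂ (fun j : {j : Fin m // rowOrder C j = k} => leadingPair C j.1)

/-- The quadratic form `q_J(u) = i·(−1)^{n+1} · Σ_{p=0}^{2n−1} (−1)^{p+1} u_p·conj(u_{2n−1−p})`. -/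
noncomputable def qJ (n : ℕ) (u : Fin (2 * n) → ℂ) : ℂ :=
  Complex.I * (-1 : ℂ) ^ (n + 1) *
    ∑ p : Fin (2 * n), (-1 : ℂ) ^ ((p : ℕ) + 1) * u p * (starRingEnd ℂ) (u p.rev)

/-- The system `C` is dissipative if `q_J(v) − q_J(u) ≥ 0` for every `(u,v)` satisfying
`Σ_k C_{j,k}u_k + C_{j,2n+k}v_k = 0` for all rows `j` (dissipativity of the operator
generated by `l₀(y) = (−i)^{2n}y^{(2n)}` and these boundary conditions). -/
def IsDissipativeBC (n : ℕ) (C : Matrix (Fin (2 * n)) (Fin (2 * n) ⊕ Fin (2 * n)) ℂ) : Prop :=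
  ∀ u v : Fin (2 * n) → ℂ,
    (∀ j, ∑ k, (C j (Sum.inl k) * u k + C j (Sum.inr k) * v k) = 0) →
    0 ≤ qJ n v - qJ n u

namespace BC

abbrev Ix (n : ℕ) := Fin (2 * n) ⊕ Fin (2 * n)
abbrev E (n : ℕ) := EuclideanSpace ℂ (Ix n)

def lv {n : ℕ} : Ix n → ℕ := Sum.elim (fun p => (p : ℕ)) (fun p => (p : ℕ))
def rv {n : ℕ} : Ix n → Ix n := Sum.map Fin.rev Fin.rev
noncomputable def c0 (n : ℕ) (p : Fin (2 * n)) : ℂ :=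
  Complex.I * (-1 : ℂ) ^ (n + 1) * (-1 : ℂ) ^ ((p : ℕ) + 1)
noncomputable def cc {n : ℕ} : Ix n → ℂ := Sum.elim (fun p => - c0 n p) (fun p => c0 n p)

lemma lv_lt {n : ℕ} (i : Ix n) : lv i < 2 * n := by
  rcases i with i | i <;> exact i.2

lemma lv_rv {n : ℕ} (i : Ix n) : lv (rv i) = 2 * n - 1 - lv i := by
  rcases i with i | i
  · change ((Fin.rev i : Fin (2 * n)) : ℕ) = 2 * n - 1 - (i : ℕ)
    rw [Fin.val_rev]; omega
  · change ((Fin.rev i : Fin (2 * n)) : ℕ) = 2 * n - 1 - (i : ℕ)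
    rw [Fin.val_rev]; omega

lemma rv_rv {n : ℕ} (i : Ix n) : rv (rv i) = i := by
  rcases i with i | i
  · exact congrArg Sum.inl (Fin.rev_rev i)
  · exact congrArg Sum.inr (Fin.rev_rev i)

lemma c0_sq (n : ℕ) (p : Fin (2 * n)) : c0 n p * c0 n p = -1 := by
  have h : ∀ a : ℕ, ((-1 : ℂ) ^ a) * (-1) ^ a = 1 := fun a => by
    rw [← mul_pow]; simp
  have h1 := h (n+1)
  have h2 := h (p+1)
  have h3 := Complex.I_mul_I
  unfold c0
  calc _ = (Complex.I * Complex.I) * ((-1 : ℂ) ^ (n + 1) * (-1 : ℂ) ^ (n + 1)) *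
        ((-1 : ℂ) ^ ((p : ℕ) + 1) * (-1 : ℂ) ^ ((p : ℕ) + 1)) := by ring
    _ = -1 := by rw [h1, h2, h3]; ring

lemma c0_rev (n : ℕ) (p : Fin (2 * n)) : c0 n p.rev = - c0 n p := by
  unfold c0
  have h : (-1 : ℂ) ^ ((p.rev : ℕ) + 1) = - (-1 : ℂ) ^ ((p : ℕ) + 1) := by
    have hp := p.2
    have e : (p.rev : ℕ) + 1 = 2 * n - p := by rw [Fin.val_rev]; omega
    rw [e]
    rcases Nat.even_or_odd (p : ℕ) with h | h
    · have : Even (2 * n - (p : ℕ)) := by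
        rw [Nat.even_sub hp.le]; simp [h]
      rw [this.neg_one_pow, (Even.add_one h).neg_one_pow]; simp
    · have : Odd (2 * n - (p : ℕ)) := by
        obtain ⟨a, ha⟩ := h
        exact ⟨n - a - 1, by omega⟩
      rw [this.neg_one_pow, (Odd.add_one h).neg_one_pow]
  rw [h]; ring

lemma c0_conj (n : ℕ) (p : Fin (2 * n)) : (starRingEnd ℂ) (c0 n p) = - c0 n p := by
  simp [c0]

lemma cc_sq {n : ℕ} (i : Ix n) : cc i * cc i = -1 := by
  rcases i with i | i <;> simp [cc, c0_sq]

lemma cc_rv {n : ℕ} (i : Ix n) : cc (rv i) = - cc i := by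
  rcases i with i | i <;> simp [cc, rv, c0_rev]

lemma cc_conj {n : ℕ} (i : Ix n) : (starRingEnd ℂ) (cc i) = - cc i := by
  rcases i with i | i <;> simp [cc, c0_conj]

noncomputable def Jl (n : ℕ) : E n →ₗ[ℂ] E n where
  toFun x := WithLp.toLp 2 (fun i => - cc i * x (rv i))
  map_add' x y := by ext i; simp; ring
  map_smul' a x := by ext i; simp; ring

lemma Jl_apply {n : ℕ} (x : E n) (i : Ix n) : Jl n x i = - cc i * x (rv i) := rfl

lemma Jl_inv (n : ℕ) (x : E n) : Jl n (Jl n x) = x := by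
  ext i
  rw [Jl_apply, Jl_apply, rv_rv, cc_rv]
  linear_combination (-x i) * cc_sq i

noncomputable def J (n : ℕ) : E n ≃ₗ[ℂ] E n :=
  LinearEquiv.ofInvolutive (Jl n) (Jl_inv n)

lemma J_apply {n : ℕ} (x : E n) (i : Ix n) : J n x i = - cc i * x (rv i) := rfl

lemma inner_J {n : ℕ} (x y : E n) :
    inner ℂ (J n x) y = ∑ i, cc i * y i * (starRingEnd ℂ) (x (rv i)) := by
  rw [PiLp.inner_apply]
  refine Finset.sum_congr rfl fun i _ => ?_
  rw [J_apply]
  simp [cc_conj]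
  ring

def rvE (n : ℕ) : Ix n ≃ Ix n := ⟨rv, rv, rv_rv, rv_rv⟩

lemma inner_J_symm {n : ℕ} (x y : E n) :
    inner ℂ (J n x) y = inner ℂ x (J n y) := by
  rw [inner_J, PiLp.inner_apply, ← Equiv.sum_comp (rvE n)]
  refine Finset.sum_congr rfl fun i _ => ?_
  change cc (rv i) * y (rv i) * (starRingEnd ℂ) (x (rv (rv i))) = _
  rw [J_apply, rv_rv, cc_rv]
  simp

noncomputable def Q {n : ℕ} (x : E n) : ℝ := (inner ℂ (J n x) x).re

lemma qJ_eq (n : ℕ) (x : E n) :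
    qJ n (fun p => x (Sum.inr p)) - qJ n (fun p => x (Sum.inl p)) = inner ℂ (J n x) x := by
  rw [inner_J, Fintype.sum_sum_type]
  unfold qJ
  rw [Finset.mul_sum, Finset.mul_sum, sub_eq_add_neg, ← Finset.sum_neg_distrib, add_comm]
  congr 1 <;> refine Finset.sum_congr rfl fun i _ => ?_ <;> simp [cc, rv, c0] <;> ring

def F {n : ℕ} (k : ℕ) : Submodule ℂ (E n) where
  carrier := {x | ∀ i, lv i < k → x i = 0}
  add_mem' {x y} hx hy i hi := by simp [hx i hi, hy i hi]
  zero_mem' i hi := by simp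
  smul_mem' a x hx i hi := by simp [hx i hi]

lemma mem_F {n k : ℕ} (x : E n) : x ∈ F k ↔ ∀ i, lv i < k → x i = 0 := Iff.rfl

noncomputable def kerOf {n : ℕ} {κ : Type} [Fintype κ] (A : Matrix κ (Ix n) ℂ) :
    Submodule ℂ (E n) :=
  LinearMap.ker (A.mulVecLin ∘ₗ (WithLp.linearEquiv 2 ℂ (Ix n → ℂ)).toLinearMap)

lemma mem_kerOf {n : ℕ} {κ : Type} [Fintype κ] (A : Matrix κ (Ix n) ℂ) (x : E n) :
    x ∈ kerOf A ↔ ∀ j, ∑ i, A j i * x i = 0 := by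
  rw [kerOf, LinearMap.mem_ker, funext_iff]
  rfl

lemma finrank_kerOf {n : ℕ} {κ : Type} [Fintype κ] (A : Matrix κ (Ix n) ℂ) :
    A.rank + Module.finrank ℂ (kerOf A) = 4 * n := by
  have h := LinearMap.finrank_range_add_finrank_ker
    (A.mulVecLin ∘ₗ (WithLp.linearEquiv 2 ℂ (Ix n → ℂ)).toLinearMap)
  have h2 : Module.finrank ℂ (E n) = 4 * n := by
    rw [finrank_euclideanSpace]; simp; ring
  rw [h2, LinearEquiv.range_comp] at h
  exact h

lemma card_lv {n k : ℕ} (hk : k ≤ 2 * n) : Fintype.card {i : Ix n // lv i < k} = 2 * k := by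
  have e : Fintype.card {p : Fin (2 * n) // (p : ℕ) < k} = k := by
    rw [Fintype.card_subtype]
    have := Fin.card_filter_val_lt (n := 2 * n) (m := k)
    simpa [hk] using this
  rw [Fintype.card_congr Equiv.subtypeSum, Fintype.card_sum]
  change Fintype.card {p : Fin (2 * n) // (p : ℕ) < k} +
    Fintype.card {p : Fin (2 * n) // (p : ℕ) < k} = _
  rw [e]; ring


lemma row_lt {n : ℕ} (hn : 1 ≤ n) (C : Matrix (Fin (2 * n)) (Ix n) ℂ) (j : Fin (2 * n)) :
    rowOrder C j < 2 * n := by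
  unfold rowOrder
  set S := {k : ℕ | ∃ h : k < 2 * n, C j (Sum.inl ⟨k, h⟩) ≠ 0 ∨ C j (Sum.inr ⟨k, h⟩) ≠ 0}
  rcases S.eq_empty_or_nonempty with h | h
  · rw [h]; simp; omega
  · have hb : BddAbove S := ⟨2 * n, fun k hk => hk.1.le⟩
    exact (Nat.sSup_mem h hb).1

lemma row_zero {n : ℕ} (C : Matrix (Fin (2 * n)) (Ix n) ℂ) (j : Fin (2 * n)) (i : Ix n)
    (h : rowOrder C j < lv i) : C j i = 0 := by
  by_contra hc
  have hb : BddAbove {k : ℕ | ∃ h : k < 2 * n, C j (Sum.inl ⟨k, h⟩) ≠ 0 ∨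
      C j (Sum.inr ⟨k, h⟩) ≠ 0} := ⟨2 * n, fun k hk => hk.1.le⟩
  have : lv i ≤ rowOrder C j := by
    apply le_csSup hb
    refine ⟨lv_lt i, ?_⟩
    rcases i with i | i
    · exact Or.inl hc
    · exact Or.inr hc
  omega

lemma indep {n : ℕ} (hn : 1 ≤ n) (C : Matrix (Fin (2 * n)) (Ix n) ℂ) (hC : IsNormalized C)
    (k : ℕ) (P : Fin (2 * n) → Prop) [DecidablePred P] (hP : ∀ j, P j → k ≤ rowOrder C j) :
    LinearIndependent ℂ (Sum.elim (fun j : {j // P j} => C j.1)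
      (fun i : {i : Ix n // lv i < k} => (Pi.single i.1 1 : Ix n → ℂ))) := by
  rw [Fintype.linearIndependent_iff]
  intro g hg
  rw [Fintype.sum_sum_type] at hg
  simp only [Sum.elim_inl, Sum.elim_inr] at hg
  set a : Fin (2 * n) → ℂ := fun j => if h : P j then g (Sum.inl ⟨j, h⟩) else 0 with ha
  have key : ∀ i : Ix n, k ≤ lv i → ∑ j, a j * C j i = 0 := by
    intro i hi
    have h1 := congrFun hg i
    simp only [Pi.add_apply, Finset.sum_apply, Pi.smul_apply, smul_eq_mul, Pi.zero_apply] at h1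
    have h2 : ∑ x : {i : Ix n // lv i < k}, g (Sum.inr x) * (Pi.single x.1 1 : Ix n → ℂ) i = 0 := by
      refine Finset.sum_eq_zero fun x _ => ?_
      have : i ≠ x.1 := by rintro rfl; have := x.2; omega
      rw [Pi.single_eq_of_ne this, mul_zero]
    rw [h2, add_zero] at h1
    rw [← h1, ← Finset.sum_subset (Finset.subset_univ (Finset.univ.filter P)),
      Finset.sum_subtype (p := P) _ (by simp)]
    · refine Finset.sum_congr rfl fun x _ => ?_
      simp [ha, x.2]
    · intro x _ hx
      have : ¬ P x := by simpa using hx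
      simp [ha, this]
  have a0 : ∀ j, a j = 0 := by
    by_contra! hne
    obtain ⟨j0, hj0⟩ := hne
    obtain ⟨j, hj, hmax⟩ := Finset.exists_max_image (Finset.univ.filter fun j => a j ≠ 0)
      (rowOrder C) ⟨j0, by simpa using hj0⟩
    have haj : a j ≠ 0 := by simpa using hj
    have hPj : P j := by
      by_contra h; exact haj (by simp [ha, h])
    have hK := hP j hPj
    have hlt := row_lt hn C j
    have hsum : ∀ i : Ix n, lv i = rowOrder C j →
        ∑ x : {x : Fin (2 * n) // rowOrder C x = rowOrder C j}, a x.1 * C x.1 i = 0 := by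
      intro i hi
      rw [← key i (by omega), ← Finset.sum_subset
        (Finset.subset_univ (Finset.univ.filter fun x => rowOrder C x = rowOrder C j)),
        Finset.sum_subtype (p := fun x => rowOrder C x = rowOrder C j) _ (by simp)]
      intro x _ hx
      have hx : rowOrder C x ≠ rowOrder C j := by simpa using hx
      by_cases hax : a x = 0
      · simp [hax]
      · have := hmax x (by simpa using hax)
        rw [row_zero C x i (by omega), mul_zero]
    have h3 := Fintype.linearIndependent_iff.mp (hC (rowOrder C j)) (fun x => a x.1) (by
      have e : ∀ x : {x : Fin (2 * n) // rowOrder C x = rowOrder C j},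
          leadingPair C x.1 = (C x.1 (Sum.inl ⟨rowOrder C j, hlt⟩),
            C x.1 (Sum.inr ⟨rowOrder C j, hlt⟩)) := by
        rintro ⟨x, hx⟩
        unfold leadingPair
        simp only [hx, hlt, dif_pos]
      simp only [e]
      ext
      · simpa [Prod.fst_sum] using hsum (Sum.inl ⟨rowOrder C j, hlt⟩) rfl
      · simpa [Prod.snd_sum] using hsum (Sum.inr ⟨rowOrder C j, hlt⟩) rfl) ⟨j, rfl⟩
    exact haj h3
  have g0 : ∀ j : {j // P j}, g (Sum.inl j) = 0 := by
    intro j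
    have := a0 j.1
    simpa [ha, j.2] using this
  rintro (j | i)
  · exact g0 j
  · have h1 := congrFun hg i.1
    simp only [g0, zero_smul, Finset.sum_const_zero, zero_add, Finset.sum_apply, Pi.smul_apply,
      smul_eq_mul, Pi.zero_apply] at h1
    rw [Finset.sum_eq_single i] at h1
    · simpa using h1
    · intro b _ hb
      rw [Pi.single_eq_of_ne (fun h => hb (Subtype.ext h.symm)), mul_zero]
    · simp

lemma finrank_gen {n : ℕ} (hn : 1 ≤ n) (C : Matrix (Fin (2 * n)) (Ix n) ℂ) (hC : IsNormalized C)
    (k : ℕ) (hk : k ≤ 2 * n) (P : Fin (2 * n) → Prop) [DecidablePred P]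
    (hP : ∀ j, P j → k ≤ rowOrder C j) (V : Submodule ℂ (E n))
    (hV : ∀ x, x ∈ V ↔ (∀ j, P j → ∑ i, C j i * x i = 0) ∧ x ∈ F k) :
    Fintype.card {j // P j} + 2 * k + Module.finrank ℂ V = 4 * n := by
  have h := indep hn C hC k P hP
  have hr := LinearIndependent.rank_matrix (M := Matrix.of (Sum.elim (fun j : {j // P j} => C j.1)
      (fun i : {i : Ix n // lv i < k} => (Pi.single i.1 1 : Ix n → ℂ)))) h
  have hf := finrank_kerOf (Matrix.of (Sum.elim (fun j : {j // P j} => C j.1)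
      (fun i : {i : Ix n // lv i < k} => (Pi.single i.1 1 : Ix n → ℂ))))
  rw [hr, Fintype.card_sum, card_lv hk] at hf
  have hVe : V = kerOf (Matrix.of (Sum.elim (fun j : {j // P j} => C j.1)
      (fun i : {i : Ix n // lv i < k} => (Pi.single i.1 1 : Ix n → ℂ)))) := by
    ext x
    rw [hV, mem_kerOf, Sum.forall, mem_F]
    simp [Pi.single_apply]
  rw [hVe]
  exact hf

lemma finrank_F {n : ℕ} (hn : 1 ≤ n) (C : Matrix (Fin (2 * n)) (Ix n) ℂ) (hC : IsNormalized C)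
    (k : ℕ) (hk : k ≤ 2 * n) : 2 * k + Module.finrank ℂ (F k : Submodule ℂ (E n)) = 4 * n := by
  have := finrank_gen hn C hC k hk (fun _ => False) (by simp) (F k) (by simp)
  simpa using this

lemma finrank_VF {n : ℕ} (hn : 1 ≤ n) (C : Matrix (Fin (2 * n)) (Ix n) ℂ) (hC : IsNormalized C)
    (k : ℕ) (hk : k ≤ 2 * n) :
    (Finset.univ.filter fun j => k ≤ rowOrder C j).card + 2 * k
      + Module.finrank ℂ (kerOf C ⊓ F k : Submodule ℂ (E n)) = 4 * n := by
  have := finrank_gen hn C hC k hk (fun j => k ≤ rowOrder C j) (by simp) (kerOf C ⊓ F k) (by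
    intro x
    rw [Submodule.mem_inf, mem_kerOf]
    refine ⟨fun h => ⟨fun j _ => h.1 j, h.2⟩, fun h => ⟨fun j => ?_, h.2⟩⟩
    by_cases hj : k ≤ rowOrder C j
    · exact h.1 j hj
    · refine Finset.sum_eq_zero fun i _ => ?_
      by_cases hi : lv i < k
      · rw [h.2 i hi, mul_zero]
      · rw [row_zero C j i (by omega), zero_mul])
  rwa [Fintype.card_subtype] at this

/-- The comparison subspace on which `t * Q` is nonpositive. -/
lemma exists_G (n : ℕ) (t : ℝ) (k : ℕ) : ∃ G : Submodule ℂ (E n),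
    (∀ x, x ∈ G ↔ ∀ i, lv i < n → x i = if lv i < k then 0 else t * cc i * x (rv i)) ∧
    2 * n ≤ Module.finrank ℂ G := by
  let A : Matrix {i : Ix n // lv i < n} (Ix n) ℂ := fun i i' =>
    (if i' = i.1 then 1 else 0) -
      (if lv i.1 < k then 0 else t * cc i.1) * (if i' = rv i.1 then 1 else 0)
  refine ⟨kerOf A, fun x => ?_, ?_⟩
  · rw [mem_kerOf, Subtype.forall]
    refine forall_congr' fun i => forall_congr' fun hi => ?_
    have e : ∑ i', A ⟨i, hi⟩ i' * x i' =
        x i - (if lv i < k then 0 else t * cc i) * x (rv i) := by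
      simp [A, sub_mul, Finset.sum_sub_distrib, mul_assoc]
    rw [e, sub_eq_zero]
    split_ifs <;> simp
  · have h1 := finrank_kerOf A
    have h2 := A.rank_le_card_height
    rw [card_lv (by omega)] at h2
    omega

lemma main_ineq {n : ℕ} (t : ℝ) (ht : t * t = 1) (V : Submodule ℂ (E n))
    (hV : ∀ x ∈ V, 0 ≤ t * Q x) (k : ℕ) (hk : k ≤ n)
    (hF : 2 * k + Module.finrank ℂ (F k : Submodule ℂ (E n)) = 4 * n) :
    Module.finrank ℂ (V ⊓ F k : Submodule ℂ (E n)) + 2 * k ≤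
      Module.finrank ℂ (V ⊓ F (2 * n - k) : Submodule ℂ (E n)) + 2 * n := by
  obtain ⟨G, hG, hGd⟩ := exists_G n t k
  have hGF : G ≤ F k := by
    intro x hx i hi
    rw [(hG x).1 hx i (by omega), if_pos hi]
  have hsub : (V ⊓ F k) ⊓ G ≤ V ⊓ F (2 * n - k) := by
    rintro x ⟨⟨hxV, hxF⟩, hxG⟩
    refine ⟨hxV, ?_⟩
    have hx := (hG x).1 hxG
    let T : Ix n → ℝ := fun i => t * (cc i * x i * (starRingEnd ℂ) (x (rv i))).re
    have hT : t * Q x = ∑ i, T i := by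
      rw [Q, inner_J, Complex.re_sum, Finset.mul_sum]
    have hTrv : ∀ i, T (rv i) = T i := by
      intro i
      simp only [T]
      rw [rv_rv, cc_rv, ← Complex.conj_re]
      congr 2
      simp [cc_conj]
      ring
    have hT1 : ∀ i, lv i < n → T i = if lv i < k then 0 else - Complex.normSq (x (rv i)) := by
      intro i hi
      simp only [T]
      rw [hx i hi]
      split_ifs with h
      · simp
      · have : cc i * (t * cc i * x (rv i)) * (starRingEnd ℂ) (x (rv i))
            = ((- t * Complex.normSq (x (rv i)) : ℝ) : ℂ) := by
          push_cast
          rw [← Complex.mul_conj]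
          linear_combination (t * x (rv i) * (starRingEnd ℂ) (x (rv i))) * cc_sq i
        rw [this, Complex.ofReal_re]
        linear_combination (- Complex.normSq (x (rv i))) * ht
    have hT0 : ∀ i, T i ≤ 0 := by
      have aux : ∀ i, lv i < n → T i ≤ 0 := by
        intro i hi
        rw [hT1 i hi]
        split_ifs
        · exact le_rfl
        · have := Complex.normSq_nonneg (x (rv i)); linarith
      intro i
      by_cases hi : lv i < n
      · exact aux i hi
      · rw [← hTrv]
        apply aux
        have := lv_lt i
        rw [lv_rv]; omega
    have hsum : ∑ i, T i = 0 := le_antisymm (Finset.sum_nonpos fun i _ => hT0 i) (hT ▸ hV x hxV)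
    have hall := (Finset.sum_eq_zero_iff_of_nonpos (fun i _ => hT0 i)).1 hsum
    have hz : ∀ i, lv i < n → k ≤ lv i → x (rv i) = 0 := by
      intro i hi hki
      have := hall i (Finset.mem_univ _)
      rw [hT1 i hi, if_neg (by omega)] at this
      exact Complex.normSq_eq_zero.1 (by linarith)
    intro i hi
    by_cases h1 : lv i < k
    · exact hxF i h1
    by_cases h2 : lv i < n
    · rw [hx i h2, if_neg h1, hz i h2 (by omega), mul_zero]
    · rw [← rv_rv i]
      have := lv_lt i
      apply hz <;> rw [lv_rv] <;> omega
  have h1 := Submodule.finrank_sup_add_finrank_inf_eq (V ⊓ F k) G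
  have h2 : Module.finrank ℂ ((V ⊓ F k) ⊔ G : Submodule ℂ (E n)) ≤
      Module.finrank ℂ (F k : Submodule ℂ (E n)) :=
    Submodule.finrank_mono (sup_le inf_le_right hGF)
  have h3 := Submodule.finrank_mono hsub
  omega

/-- The orthogonal complement of `V` with respect to the indefinite form. -/
noncomputable def W {n : ℕ} (V : Submodule ℂ (E n)) : Submodule ℂ (E n) :=
  (V.map (J n).toLinearMap)ᗮ

lemma mem_W {n : ℕ} (V : Submodule ℂ (E n)) (y : E n) :
    y ∈ W V ↔ ∀ x ∈ V, inner ℂ (J n x) y = 0 := by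
  rw [W, Submodule.mem_orthogonal]
  constructor
  · intro h x hx
    exact h _ ⟨x, hx, rfl⟩
  · rintro h _ ⟨x, hx, rfl⟩
    exact h x hx

lemma W_F {n k : ℕ} (hk : k ≤ 2 * n) : W (F (2 * n - k) : Submodule ℂ (E n)) = F k := by
  ext y
  rw [mem_W]
  constructor
  · intro h i hi
    have h1 := h (EuclideanSpace.single (rv i) 1) (by
      intro i' hi'
      have := lv_lt i
      have hne : i' ≠ rv i := by
        rintro rfl
        rw [lv_rv] at hi'; omega
      simp [hne])
    rw [inner_J, Finset.sum_eq_single i] at h1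
    · have hc : cc i ≠ 0 := by
        intro h0; have := cc_sq i; rw [h0] at this; simp at this
      simpa [hc] using h1
    · intro b _ hb
      have : rv b ≠ rv i := fun h => hb (by rw [← rv_rv b, h, rv_rv])
      simp [this]
    · simp
  · intro hy x hx
    rw [inner_J]
    refine Finset.sum_eq_zero fun i _ => ?_
    by_cases hi : lv i < k
    · rw [hy i hi]; simp
    · have := lv_lt i
      rw [hx (rv i) (by rw [lv_rv]; omega)]; simp

lemma finrank_WF {n k : ℕ} (hk : k ≤ 2 * n) (V : Submodule ℂ (E n)) :
    Module.finrank ℂ (V ⊔ F (2 * n - k) : Submodule ℂ (E n)) +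
      Module.finrank ℂ (W V ⊓ F k : Submodule ℂ (E n)) = 4 * n := by
  have h : W V ⊓ F k = ((V ⊔ F (2 * n - k)).map (J n).toLinearMap)ᗮ := by
    rw [← W_F hk, W, W, Submodule.inf_orthogonal, Submodule.map_sup]
  have h1 := Submodule.finrank_add_finrank_orthogonal
    ((V ⊔ F (2 * n - k)).map (J n).toLinearMap)
  have h2 : Module.finrank ℂ (E n) = 4 * n := by
    rw [finrank_euclideanSpace]; simp; ring
  rw [h]
  rw [h2, LinearEquiv.finrank_map_eq (J n)] at h1
  exact h1

lemma F_zero {n : ℕ} : (F 0 : Submodule ℂ (E n)) = ⊤ := by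
  ext x; simp [mem_F]

lemma F_top {n : ℕ} : (F (2 * n) : Submodule ℂ (E n)) = ⊥ := by
  ext x
  rw [mem_F, Submodule.mem_bot]
  constructor
  · intro h; ext i; exact h i (lv_lt i)
  · rintro rfl; simp

lemma W_nonpos {n : ℕ} (V : Submodule ℂ (E n)) (hV : ∀ x ∈ V, 0 ≤ Q x)
    (hd : Module.finrank ℂ V = 2 * n)
    (hF : 2 * 0 + Module.finrank ℂ (F 0 : Submodule ℂ (E n)) = 4 * n) :
    ∀ w ∈ W V, Q w ≤ 0 := by
  intro w hw
  by_contra! hpos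
  have hwV : w ∉ V := by
    intro h
    have := (mem_W V w).1 hw w h
    rw [Q, this] at hpos
    simp at hpos
  have hlt : V < V ⊔ Submodule.span ℂ {w} := by
    refine lt_of_le_of_ne le_sup_left fun h => hwV ?_
    rw [h]
    exact Submodule.mem_sup_right (Submodule.mem_span_singleton_self w)
  have hnn : ∀ x ∈ V ⊔ Submodule.span ℂ {w}, 0 ≤ (1 : ℝ) * Q x := by
    intro x hx
    obtain ⟨v, hv, y, hy, rfl⟩ := Submodule.mem_sup.1 hx
    obtain ⟨a, rfl⟩ := Submodule.mem_span_singleton.1 hy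
    have h1 := (mem_W V w).1 hw v hv
    have h2 : inner ℂ (J n w) v = 0 := by
      rw [inner_J_symm, ← inner_conj_symm, h1, map_zero]
    have : Q (v + a • w) = Q v + Complex.normSq a * Q w := by
      unfold Q
      rw [map_add, map_smul, inner_add_left, inner_add_right, inner_add_right, inner_smul_left,
        inner_smul_left, inner_smul_right, inner_smul_right, h1, h2]
      have e : (starRingEnd ℂ) a * (a * inner ℂ (J n w) w)
          = (Complex.normSq a : ℂ) * inner ℂ (J n w) w := by
        rw [← Complex.mul_conj]; ring
      rw [e]
      simp
    rw [this]
    have := hV v hv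
    have := Complex.normSq_nonneg a
    positivity
  have h := main_ineq 1 (by norm_num) _ hnn 0 (by omega) hF
  rw [F_zero, Nat.sub_zero, F_top, inf_top_eq, inf_bot_eq, finrank_bot] at h
  have := Submodule.finrank_lt_finrank_of_lt hlt
  omega

lemma count_eq {n : ℕ} (hn : 1 ≤ n) (C : Matrix (Fin (2 * n)) (Ix n) ℂ) (hC : IsNormalized C)
    (hdiss : IsDissipativeBC n C) (k : ℕ) (hk : k ≤ n) :
    (Finset.univ.filter fun j => k ≤ rowOrder C j).card + 2 * k =
      (Finset.univ.filter fun j => 2 * n - k ≤ rowOrder C j).card + 2 * n := by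
  have hFk := finrank_F hn C hC k (by omega)
  have hFk' := finrank_F hn C hC (2 * n - k) (by omega)
  have hV : ∀ x ∈ kerOf C, 0 ≤ Q x := by
    intro x hx
    have h := hdiss (fun p => x (Sum.inl p)) (fun p => x (Sum.inr p)) (by
      intro j
      have := (mem_kerOf C x).1 hx j
      rw [Fintype.sum_sum_type] at this
      rw [Finset.sum_add_distrib]
      exact this)
    rw [qJ_eq] at h
    exact (Complex.le_def.1 h).1
  have hd : Module.finrank ℂ (kerOf C) = 2 * n := by
    have := finrank_VF hn C hC 0 (by omega)
    rw [F_zero, inf_top_eq] at this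
    simp at this
    omega
  have hW := W_nonpos _ hV hd (finrank_F hn C hC 0 (by omega))
  have i1 := main_ineq 1 (by norm_num) (kerOf C) (by simpa using hV) k hk hFk
  have i2 := main_ineq (-1) (by norm_num) (W (kerOf C)) (by simpa using hW) k hk hFk
  have w1 := finrank_WF (k := k) (by omega) (kerOf C)
  have w2 := finrank_WF (k := 2 * n - k) (by omega) (kerOf C)
  rw [show 2 * n - (2 * n - k) = k by omega] at w2
  have s1 := Submodule.finrank_sup_add_finrank_inf_eq (kerOf C) (F k)
  have s2 := Submodule.finrank_sup_add_finrank_inf_eq (kerOf C) (F (2 * n - k))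
  have v1 := finrank_VF hn C hC k (by omega)
  have v2 := finrank_VF hn C hC (2 * n - k) (by omega)
  omega

lemma card_step {n : ℕ} (C : Matrix (Fin (2 * n)) (Ix n) ℂ) (k : ℕ) :
    (Finset.univ.filter fun j => k ≤ rowOrder C j).card =
      (Finset.univ.filter fun j => rowOrder C j = k).card +
      (Finset.univ.filter fun j => k + 1 ≤ rowOrder C j).card := by
  rw [← Finset.card_union_of_disjoint]
  · congr 1
    ext j
    simp
    omega
  · rw [Finset.disjoint_filter]
    intro j _ h
    omega

lemma final {n : ℕ} (hn : 1 ≤ n) (C : Matrix (Fin (2 * n)) (Ix n) ℂ) (hC : IsNormalized C)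
    (hdiss : IsDissipativeBC n C) (j : ℕ) (hj : j < n) :
    (Finset.univ.filter fun row => rowOrder C row = j).card
      + (Finset.univ.filter fun row => rowOrder C row = 2 * n - 1 - j).card = 2 := by
  have h1 := count_eq hn C hC hdiss j (by omega)
  have h2 := count_eq hn C hC hdiss (j + 1) (by omega)
  have h3 := card_step C j
  have h4 := card_step C (2 * n - 1 - j)
  rw [show 2 * n - 1 - j + 1 = 2 * n - j by omega] at h4
  rw [show 2 * n - (j + 1) = 2 * n - 1 - j by omega] at h2
  omega

end BC

/-- for a normalized dissipative rank-`2n` system, the numbers `r_j` of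
rows of order `j` satisfy `r_j + r_{2n−1−j} = 2` for every `j < 2n`. -/
theorem stmt15 (n : ℕ) (hn : 1 ≤ n)
    (C : Matrix (Fin (2 * n)) (Fin (2 * n) ⊕ Fin (2 * n)) ℂ)
    (hrank : C.rank = 2 * n) (hnorm : IsNormalized C) (hdiss : IsDissipativeBC n C) :
    ∀ j : ℕ, j < 2 * n →
      (Finset.univ.filter fun row : Fin (2 * n) => rowOrder C row = j).card
        + (Finset.univ.filter fun row : Fin (2 * n) => rowOrder C row = 2 * n - 1 - j).card
        = 2 := by
  intro j hj
  by_cases h : j < n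
  · exact BC.final hn C hnorm hdiss j h
  · have := BC.final hn C hnorm hdiss (2 * n - 1 - j) (by omega)
    rw [show 2 * n - 1 - (2 * n - 1 - j) = j by omega] at this
    omega
end

section
/- Let n ≥ 1, m = 2n, and let C ∈ ℂ^{2n×4n} be a normalized system of boundary conditions of rank 2n that is dissipative, with orders k_1 ≥ k_2 ≥ … ≥ k_{2n} and leading pairs (α_j, β_j). Let ω_1, …, ω_{2n} be the 2n complex solutions of ω^{2n} = −1, enumerated so that Re(ω_1·e^{iπ/(4n)}) < Re(ω_2·e^{iπ/(4n)}) < … < Re(ω_{2n}·e^{iπ/(4n)}) (these real parts are pairwise distinct, so the enumeration is well defined). For s ∈ ℂ, s ≠ 0, let D(s) be the 2n×2n matrix whose (j,i) entry equals α_j·ω_i^{k_j} for 1 ≤ i ≤ n−1, (α_j + s·β_j)·ω_n^{k_j} for i = n, (α_j + s^{−1}·β_j)·ω_{n+1}^{k_j} for i = n+1, and β_j·ω_i^{k_j} for n+2 ≤ i ≤ 2n. Then the function s ↦ s·det(D(s)) is a polynomial in s of degree at most 2, say s·det(D(s)) = θ_{−1} + θ_0·s + θ_1·s², and at least one of θ_{−1},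 θ_1 is nonzero; i.e., the boundary conditions are Birkhoff regular. -/
open ComplexOrder

lemma aux_vander {ι : Type*} (s : Finset ι) (f v : ι → ℂ) (hf : Set.InjOn f s)
    (h : ∀ k : ℕ, ∑ i ∈ s, v i * f i ^ k = 0) : ∀ i ∈ s, v i = 0 := by
  classical
  let e := s.equivFin
  have key : (fun j : Fin s.card => v (e.symm j)) = 0 := by
    refine Matrix.eq_zero_of_forall_pow_sum_mul_pow_eq_zero
      (f := fun j : Fin s.card => f (e.symm j)) ?_ ?_
    · intro a b hab
      have := hf (e.symm a).2 (e.symm b).2 hab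
      exact e.symm.injective (Subtype.ext this)
    · intro k
      rw [← h k, ← Finset.sum_coe_sort s]
      exact Equiv.sum_comp e.symm (fun x : s => v x * f x ^ (k : ℕ))
  intro i hi
  have := congrFun key (e ⟨i, hi⟩)
  simpa using this

/-- Positivity of the Cauchy kernel `1 / (ζ + conj η)` on the right half plane. -/
lemma aux_cauchy {ι : Type*} (s : Finset ι) (c ζ : ι → ℂ) (hinj : Set.InjOn ζ s)
    (hre : ∀ i ∈ s, 0 < (ζ i).re) :
    ∃ r : ℝ, 0 ≤ r ∧ (r = 0 → ∀ i ∈ s, c i = 0) ∧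
      ∑ i ∈ s, ∑ l ∈ s, c i * (starRingEnd ℂ) (c l) / (ζ i + (starRingEnd ℂ) (ζ l)) = (r : ℂ) := by
  have h1 : ∀ i ∈ s, ζ i + 1 ≠ 0 := by
    intro i hi h
    have := congrArg Complex.re h
    have := hre i hi
    simp at *
    linarith
  set w : ι → ℂ := fun i => (ζ i - 1) / (ζ i + 1) with hw
  set d : ι → ℂ := fun i => c i / (ζ i + 1) with hd
  have hwn : ∀ i ∈ s, ‖w i‖ < 1 := by
    intro i hi
    have hp : 0 < ‖ζ i + 1‖ := norm_pos_iff.mpr (h1 i hi)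
    rw [hw]
    simp only [norm_div]
    rw [div_lt_one hp]
    have h2 : ‖ζ i - 1‖ ^ 2 < ‖ζ i + 1‖ ^ 2 := by
      rw [Complex.sq_norm, Complex.sq_norm, Complex.normSq_apply, Complex.normSq_apply]
      have := hre i hi
      simp
      nlinarith
    exact lt_of_pow_lt_pow_left₀ 2 hp.le h2
  have hs1 : ∀ i ∈ s, ∀ l ∈ s, ζ i + (starRingEnd ℂ) (ζ l) ≠ 0 := by
    intro i hi l hl h
    have := congrArg Complex.re h
    have := hre i hi
    have := hre l hl
    simp at *
    linarith
  have hterm : ∀ i ∈ s, ∀ l ∈ s, HasSum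
      (fun k : ℕ => 2 * (d i * w i ^ k) * (starRingEnd ℂ) (d l * w l ^ k))
      (c i * (starRingEnd ℂ) (c l) / (ζ i + (starRingEnd ℂ) (ζ l))) := by
    intro i hi l hl
    have hn : ‖w i * (starRingEnd ℂ) (w l)‖ < 1 := by
      rw [norm_mul, RCLike.norm_conj]
      have a := hwn i hi
      have b := hwn l hl
      nlinarith [norm_nonneg (w i), norm_nonneg (w l)]
    have hg := (hasSum_geometric_of_norm_lt_one hn).mul_left (2 * d i * (starRingEnd ℂ) (d l))
    have hf : (fun k : ℕ => 2 * (d i * w i ^ k) * (starRingEnd ℂ) (d l * w l ^ k)) =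
        fun k : ℕ => 2 * d i * (starRingEnd ℂ) (d l) * (w i * (starRingEnd ℂ) (w l)) ^ k := by
      ext k
      simp only [map_mul, map_pow, mul_pow]
      ring
    have hv : c i * (starRingEnd ℂ) (c l) / (ζ i + (starRingEnd ℂ) (ζ l)) =
        2 * d i * (starRingEnd ℂ) (d l) * (1 - w i * (starRingEnd ℂ) (w l))⁻¹ := by
      have a := h1 i hi
      have b : (starRingEnd ℂ) (ζ l) + 1 ≠ 0 := by
        intro h
        apply h1 l hl
        have := congrArg (starRingEnd ℂ) h
        simpa using this
      have e := hs1 i hi l hl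
      have e2 : 1 - w i * (starRingEnd ℂ) (w l)
          = 2 * (ζ i + (starRingEnd ℂ) (ζ l)) / ((ζ i + 1) * ((starRingEnd ℂ) (ζ l) + 1)) := by
        simp only [hw, map_div₀, map_sub, map_add, map_one]
        field_simp
        ring
      rw [e2]
      simp only [hd, map_div₀, map_add, map_one]
      field_simp
    rw [hf, hv]
    exact hg
  have hsum : HasSum (fun k : ℕ => ∑ i ∈ s, ∑ l ∈ s,
      2 * (d i * w i ^ k) * (starRingEnd ℂ) (d l * w l ^ k))
      (∑ i ∈ s, ∑ l ∈ s, c i * (starRingEnd ℂ) (c l) / (ζ i + (starRingEnd ℂ) (ζ l))) :=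
    hasSum_sum fun i hi => hasSum_sum fun l hl => hterm i hi l hl
  have hsq : ∀ k : ℕ, ∑ i ∈ s, ∑ l ∈ s, 2 * (d i * w i ^ k) * (starRingEnd ℂ) (d l * w l ^ k)
      = ((2 * Complex.normSq (∑ i ∈ s, d i * w i ^ k) : ℝ) : ℂ) := by
    intro k
    push_cast
    rw [Complex.normSq_eq_conj_mul_self, map_sum, mul_comm (∑ i ∈ s, (starRingEnd ℂ) _),
      Finset.sum_mul_sum, Finset.mul_sum]
    refine Finset.sum_congr rfl fun i _ => ?_
    rw [Finset.mul_sum]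
    refine Finset.sum_congr rfl fun l _ => ?_
    ring
  simp_rw [hsq] at hsum
  have hre' := Complex.hasSum_re hsum
  simp only [Complex.ofReal_re] at hre'
  have him' := Complex.hasSum_im hsum
  simp only [Complex.ofReal_im] at him'
  have him0 := him'.unique hasSum_zero
  refine ⟨_, hre'.nonneg fun k => by
    have := Complex.normSq_nonneg (∑ i ∈ s, d i * w i ^ k)
    positivity, ?_, ?_⟩
  · intro h0
    rw [h0] at hre'
    rw [hasSum_zero_iff_of_nonneg (fun k => by
      have := Complex.normSq_nonneg (∑ i ∈ s, d i * w i ^ k)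
      show (0 : ℝ) ≤ _
      positivity)] at hre'
    have hv := aux_vander s w d ?_ ?_
    · intro i hi
      have := hv i hi
      simp only [hd, div_eq_zero_iff] at this
      exact this.resolve_right (h1 i hi)
    · intro i hi l hl h
      apply hinj hi hl
      have a := h1 i hi
      have b := h1 l hl
      simp only [hw] at h
      rw [div_eq_div_iff a b] at h
      linear_combination h / 2
    · intro k
      have := congrFun hre' k
      simpa using this
  · apply Complex.ext
    · simp
    · rw [him0]; simp

/-- The form `q_J` on exponential solutions. -/
lemma aux_qJ {n : ℕ} {ι : Type*} (s : Finset ι) (c ζ : ι → ℂ) (μ : ℂ)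
    (hμ : ∀ i ∈ s, ζ i ^ (2 * n) = μ)
    (hne : ∀ i ∈ s, ∀ l ∈ s, ζ i + (starRingEnd ℂ) (ζ l) ≠ 0) :
    qJ n (fun k => ∑ i ∈ s, c i * ζ i ^ (k : ℕ)) = (((-1) ^ n * (2 * μ.im) : ℝ) : ℂ) *
      ∑ i ∈ s, ∑ l ∈ s, c i * (starRingEnd ℂ) (c l) / (ζ i + (starRingEnd ℂ) (ζ l)) := by
  have hgeom : ∀ i ∈ s, ∀ l ∈ s, ∑ p : Fin (2 * n), (-1 : ℂ) ^ ((p : ℕ) + 1) * ζ i ^ (p : ℕ) *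
      (starRingEnd ℂ) (ζ l) ^ ((p.rev : Fin (2 * n)) : ℕ)
      = (2 * μ.im * Complex.I) / (ζ i + (starRingEnd ℂ) (ζ l)) := by
    intro i hi l hl
    rw [eq_div_iff (hne i hi l hl)]
    have h := (Commute.all (-ζ i) ((starRingEnd ℂ) (ζ l))).geom_sum₂_mul (2 * n)
    rw [Even.neg_pow (even_two_mul n), hμ i hi, ← map_pow, hμ l hl, Complex.sub_conj,
      ← Fin.sum_univ_eq_sum_range
        (fun p => (-ζ i) ^ p * (starRingEnd ℂ) (ζ l) ^ (2 * n - 1 - p)) (2 * n)] at h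
    have h2 : ∑ p : Fin (2 * n), (-1 : ℂ) ^ ((p : ℕ) + 1) * ζ i ^ (p : ℕ) *
      (starRingEnd ℂ) (ζ l) ^ ((p.rev : Fin (2 * n)) : ℕ) =
      - ∑ p : Fin (2 * n), (-ζ i) ^ (p : ℕ) * (starRingEnd ℂ) (ζ l) ^ (2 * n - 1 - (p : ℕ)) := by
      rw [← Finset.sum_neg_distrib]
      refine Finset.sum_congr rfl fun p _ => ?_
      have : ((p.rev : Fin (2 * n)) : ℕ) = 2 * n - 1 - (p : ℕ) := by
        rw [Fin.val_rev]; omega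
      rw [this, neg_pow (ζ i)]
      ring
    rw [h2]
    push_cast at h
    linear_combination h
  unfold qJ
  have hswap : ∑ p : Fin (2 * n), (-1 : ℂ) ^ ((p : ℕ) + 1) * (∑ i ∈ s, c i * ζ i ^ (p : ℕ)) *
      (starRingEnd ℂ) (∑ i ∈ s, c i * ζ i ^ ((p.rev : Fin (2 * n)) : ℕ))
      = ∑ i ∈ s, ∑ l ∈ s, c i * (starRingEnd ℂ) (c l) *
        ∑ p : Fin (2 * n), (-1 : ℂ) ^ ((p : ℕ) + 1) * ζ i ^ (p : ℕ) *
          (starRingEnd ℂ) (ζ l) ^ ((p.rev : Fin (2 * n)) : ℕ) := by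
    simp_rw [map_sum, mul_assoc, Finset.sum_mul_sum, Finset.mul_sum]
    rw [Finset.sum_comm]
    refine Finset.sum_congr rfl fun i _ => ?_
    rw [Finset.sum_comm]
    refine Finset.sum_congr rfl fun l _ => ?_
    refine Finset.sum_congr rfl fun p _ => ?_
    rw [map_mul, map_pow]
    ring
  rw [hswap, Finset.mul_sum, Finset.mul_sum]
  refine Finset.sum_congr rfl fun i hi => ?_
  rw [Finset.mul_sum, Finset.mul_sum]
  refine Finset.sum_congr rfl fun l hl => ?_
  rw [hgeom i hi l hl]
  push_cast
  rw [pow_succ]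
  have := hne i hi l hl
  field_simp
  rw [Complex.I_sq]
  ring

lemma aux_bdd {m : ℕ} (C : Matrix (Fin m) (Fin m ⊕ Fin m) ℂ) (j : Fin m) :
    BddAbove {k : ℕ | ∃ h : k < m, C j (Sum.inl ⟨k, h⟩) ≠ 0 ∨ C j (Sum.inr ⟨k, h⟩) ≠ 0} :=
  ⟨m, fun _ hk => hk.1.le⟩

lemma aux_zero_of_lt {m : ℕ} (C : Matrix (Fin m) (Fin m ⊕ Fin m) ℂ) (j k : Fin m)
    (h : rowOrder C j < k) : C j (Sum.inl k) = 0 ∧ C j (Sum.inr k) = 0 := by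
  by_contra hc
  rw [not_and_or] at hc
  have := le_csSup (aux_bdd C j) (show (k : ℕ) ∈ _ from ⟨k.2, hc⟩)
  unfold rowOrder at h
  omega

lemma aux_lead_ne {m : ℕ} (C : Matrix (Fin m) (Fin m ⊕ Fin m) ℂ) (hnorm : IsNormalized C)
    (j : Fin m) : leadingPair C j ≠ 0 :=
  (hnorm (rowOrder C j)).ne_zero ⟨j, rfl⟩

lemma aux_order_lt {m : ℕ} (C : Matrix (Fin m) (Fin m ⊕ Fin m) ℂ) (hnorm : IsNormalized C)
    (j : Fin m) : rowOrder C j < m := by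
  by_contra h
  apply aux_lead_ne C hnorm j
  simp [leadingPair, h]

/-- column derivative order -/
def colOrd {m : ℕ} : Fin m ⊕ Fin m → ℕ := Sum.elim (fun k => (k : ℕ)) (fun k => (k : ℕ))

/-- The rescaled boundary matrix. -/
noncomputable def scaledBC {m : ℕ} (C : Matrix (Fin m) (Fin m ⊕ Fin m) ℂ) (ε : ℝ) :
    Matrix (Fin m) (Fin m ⊕ Fin m) ℂ :=
  Matrix.of fun j x => C j x * (ε : ℂ) ^ (rowOrder C j - colOrd x)

lemma aux_scaled_zero {m : ℕ} (C : Matrix (Fin m) (Fin m ⊕ Fin m) ℂ) (hnorm : IsNormalized C)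
    (j : Fin m) (u v : ℂ) (k : Fin m) :
    scaledBC C 0 j (Sum.inl k) * u + scaledBC C 0 j (Sum.inr k) * v =
      if (k : ℕ) = rowOrder C j then (leadingPair C j).1 * u + (leadingPair C j).2 * v else 0 := by
  have hlt := aux_order_lt C hnorm j
  rcases lt_trichotomy (k : ℕ) (rowOrder C j) with h | h | h
  · have h0 : rowOrder C j - (k : ℕ) ≠ 0 := by omega
    simp [scaledBC, colOrd, h.ne, h0]
  · have hk : k = ⟨rowOrder C j, hlt⟩ := Fin.ext h
    subst hk
    simp [scaledBC, colOrd, leadingPair, hlt]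
  · have h0 := aux_zero_of_lt C j k h
    simp [scaledBC, h0.1, h0.2, h.ne']

lemma aux_indep {m : ℕ} (C : Matrix (Fin m) (Fin m ⊕ Fin m) ℂ) (hnorm : IsNormalized C) :
    Function.Injective (scaledBC C 0).vecMul := by
  rw [Matrix.vecMul_injective_iff, Fintype.linearIndependent_iff]
  intro a ha j
  have hcol : ∀ x, ∑ i, a i * scaledBC C 0 i x = 0 := by
    intro x
    have := congrFun ha x
    simpa using this
  have hlt := aux_order_lt C hnorm j
  have hk := Fintype.linearIndependent_iff.mp (hnorm (rowOrder C j)) (fun i => a i.1) ?_ ⟨j, rfl⟩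
  · exact hk
  · have h1 := hcol (Sum.inl ⟨_, hlt⟩)
    have h2 := hcol (Sum.inr ⟨_, hlt⟩)
    have e1 : ∀ i, scaledBC C 0 i (Sum.inl ⟨_, hlt⟩) =
        if rowOrder C i = rowOrder C j then (leadingPair C i).1 else 0 := by
      intro i
      have := aux_scaled_zero C hnorm i 1 0 ⟨_, hlt⟩
      simp only [mul_one, mul_zero, add_zero] at this
      rw [this]
      simp only [eq_comm]
    have e2 : ∀ i, scaledBC C 0 i (Sum.inr ⟨_, hlt⟩) =
        if rowOrder C i = rowOrder C j then (leadingPair C i).2 else 0 := by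
      intro i
      have := aux_scaled_zero C hnorm i 0 1 ⟨_, hlt⟩
      simp only [mul_one, mul_zero, zero_add] at this
      rw [this]
      simp only [eq_comm]
    simp only [e1, mul_ite, mul_zero] at h1
    simp only [e2, mul_ite, mul_zero] at h2
    rw [← Finset.sum_filter, Finset.sum_subtype (p := fun i => rowOrder C i = rowOrder C j) _
      (by simp)] at h1 h2
    apply Prod.ext
    · rw [Prod.fst_sum]
      simpa using h1
    · rw [Prod.snd_sum]
      simpa using h2

lemma aux_qJ_scale (n : ℕ) (t : ℝ) (u : Fin (2 * n) → ℂ) :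
    qJ n (fun k => (t : ℂ) ^ (k : ℕ) * u k) = (t : ℂ) ^ (2 * n - 1) * qJ n u := by
  unfold qJ
  rw [mul_left_comm, Finset.mul_sum _ _ ((t : ℂ) ^ (2 * n - 1))]
  refine congrArg _ (Finset.sum_congr rfl fun p _ => ?_)
  have : 2 * n - 1 = (p : ℕ) + ((p.rev : Fin (2 * n)) : ℕ) := by
    rw [Fin.val_rev]; omega
  rw [this, pow_add, map_mul, map_pow, Complex.conj_ofReal]
  ring

lemma aux_scaled_diss (n : ℕ) (C : Matrix (Fin (2 * n)) (Fin (2 * n) ⊕ Fin (2 * n)) ℂ)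
    (hdiss : IsDissipativeBC n C) (ε : ℝ) (hε : 0 < ε) (x : Fin (2 * n) ⊕ Fin (2 * n) → ℂ)
    (hx : (scaledBC C ε).mulVec x = 0) :
    0 ≤ qJ n (fun k => x (Sum.inr k)) - qJ n (fun k => x (Sum.inl k)) := by
  have hε' : (ε : ℂ) ≠ 0 := by exact_mod_cast hε.ne'
  have h := hdiss (fun k => ((ε⁻¹ : ℝ) : ℂ) ^ (k : ℕ) * x (Sum.inl k))
    (fun k => ((ε⁻¹ : ℝ) : ℂ) ^ (k : ℕ) * x (Sum.inr k)) ?_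
  · rw [aux_qJ_scale, aux_qJ_scale, ← mul_sub] at h
    have hp : (0 : ℂ) ≤ ((ε ^ (2 * n - 1) : ℝ) : ℂ) := by
      rw [Complex.zero_le_real]
      positivity
    have h3 := mul_nonneg hp h
    rw [← mul_assoc] at h3
    push_cast at h3
    rw [← mul_pow, mul_inv_cancel₀ hε', one_pow, one_mul] at h3
    exact h3
  · intro j
    have hj := congrFun hx j
    simp only [Matrix.mulVec, dotProduct, Fintype.sum_sum_type, Pi.zero_apply] at hj
    rw [← Finset.sum_add_distrib] at hj
    have : ∀ k : Fin (2 * n), C j (Sum.inl k) * (((ε⁻¹ : ℝ) : ℂ) ^ (k : ℕ) * x (Sum.inl k)) +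
        C j (Sum.inr k) * (((ε⁻¹ : ℝ) : ℂ) ^ (k : ℕ) * x (Sum.inr k)) =
        ((ε⁻¹ : ℝ) : ℂ) ^ (rowOrder C j) * (scaledBC C ε j (Sum.inl k) * x (Sum.inl k) +
          scaledBC C ε j (Sum.inr k) * x (Sum.inr k)) := by
      intro k
      by_cases hk : rowOrder C j < k
      · have h0 := aux_zero_of_lt C j k hk
        simp [scaledBC, h0.1, h0.2]
      · have e : rowOrder C j = (rowOrder C j - (k : ℕ)) + k := by omega
        have e2 : ((ε⁻¹ : ℝ) : ℂ) ^ (rowOrder C j) * (ε : ℂ) ^ (rowOrder C j - (k : ℕ))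
            = ((ε⁻¹ : ℝ) : ℂ) ^ (k : ℕ) := by
          conv_lhs => rw [e, pow_add]
          rw [Nat.add_sub_cancel, mul_right_comm, ← mul_pow]
          push_cast
          rw [inv_mul_cancel₀ hε', one_pow, one_mul]
        simp only [scaledBC, colOrd, Matrix.of_apply, Sum.elim_inl, Sum.elim_inr]
        rw [← e2]
        ring
    rw [Finset.sum_congr rfl fun k _ => this k, ← Finset.mul_sum, hj, mul_zero]

lemma aux_qJ_cont (n : ℕ) : Continuous (qJ n) := by
  unfold qJ
  have : Continuous (starRingEnd ℂ) := Complex.continuous_conj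
  fun_prop

lemma aux_lead_diss (n : ℕ) (C : Matrix (Fin (2 * n)) (Fin (2 * n) ⊕ Fin (2 * n)) ℂ)
    (hnorm : IsNormalized C) (hdiss : IsDissipativeBC n C)
    (x : Fin (2 * n) ⊕ Fin (2 * n) → ℂ) (hx : (scaledBC C 0).mulVec x = 0) :
    0 ≤ qJ n (fun k => x (Sum.inr k)) - qJ n (fun k => x (Sum.inl k)) := by
  set M := scaledBC C 0 with hM
  have hpd : (M * M.conjTranspose).PosDef :=
    Matrix.PosDef.mul_conjTranspose_self M (aux_indep C hnorm)
  have hunit : IsUnit (M * M.conjTranspose).det := (Matrix.isUnit_iff_isUnit_det _).mp hpd.isUnit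
  set R := M.conjTranspose * (M * M.conjTranspose)⁻¹ with hR
  have hMR : M * R = 1 := by
    rw [hR, ← Matrix.mul_assoc, Matrix.mul_nonsing_inv _ hunit]
  let w : ℝ → (Fin (2 * n) ⊕ Fin (2 * n) → ℂ) := fun ε =>
    (scaledBC C ε * R).det • x -
      R.mulVec ((scaledBC C ε * R).adjugate.mulVec ((scaledBC C ε).mulVec x))
  have hcE : Continuous (scaledBC C) := by
    apply continuous_matrix
    intro i j
    unfold scaledBC
    simp only [Matrix.of_apply]
    fun_prop
  have hw : Continuous w := by
    have h1 : Continuous fun ε => scaledBC C ε * R := hcE.matrix_mul continuous_const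
    exact (h1.matrix_det.smul continuous_const).sub
      (continuous_const.matrix_mulVec (h1.matrix_adjugate.matrix_mulVec
        (hcE.matrix_mulVec continuous_const)))
  have hw0 : w 0 = x := by
    simp only [w]
    rw [← hM, hMR, hx]
    simp
  have hker : ∀ ε, (scaledBC C ε).mulVec (w ε) = 0 := by
    intro ε
    simp only [w]
    rw [Matrix.mulVec_sub, Matrix.mulVec_smul, Matrix.mulVec_mulVec, Matrix.mulVec_mulVec,
      Matrix.mul_adjugate, Matrix.smul_mulVec, Matrix.one_mulVec, sub_self]
  have hQ : Continuous fun ε => qJ n (fun k => w ε (Sum.inr k)) - qJ n (fun k => w ε (Sum.inl k)) := by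
    have := aux_qJ_cont n
    fun_prop
  have hlim := (hQ.tendsto 0).mono_left (nhdsWithin_le_nhds (s := Set.Ioi 0))
  rw [hw0] at hlim
  refine ge_of_tendsto hlim ?_
  filter_upwards [self_mem_nhdsWithin] with ε hε
  exact aux_scaled_diss n C hdiss ε hε _ (hker ε)

lemma aux_core (n : ℕ) (C : Matrix (Fin (2 * n)) (Fin (2 * n) ⊕ Fin (2 * n)) ℂ)
    (hnorm : IsNormalized C) (hdiss : IsDissipativeBC n C)
    (ω : Fin (2 * n) → ℂ) (hω : ∀ i, ω i ^ (2 * n) = -1) (hinj : Function.Injective ω)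
    (ρ : ℂ) (S : Finset (Fin (2 * n))) (hneg : ∀ i ∈ S, (ω i * ρ).re < 0)
    (hpos : ∀ i ∉ S, 0 < (ω i * ρ).re) (hsign : 0 < (-1) ^ n * (ρ ^ (2 * n)).im) :
    (Matrix.of fun j i : Fin (2 * n) =>
      (if i ∈ S then (leadingPair C j).1 else (leadingPair C j).2) * ω i ^ rowOrder C j).det ≠ 0 := by
  intro hdet
  obtain ⟨c, hc0, hc⟩ := Matrix.exists_mulVec_eq_zero_iff.mpr hdet
  have hρ : ρ ≠ 0 := by
    rintro rfl
    rcases Nat.eq_zero_or_pos n with h | h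
    · subst h; simp at hsign
    · rw [zero_pow (by omega)] at hsign
      simp at hsign
  set ζ : Fin (2 * n) → ℂ := fun i => ω i * ρ with hζ
  have hζinj : Function.Injective ζ := fun a b h => hinj (mul_right_cancel₀ hρ h)
  set μ : ℂ := -ρ ^ (2 * n) with hμ
  have hζμ : ∀ i, ζ i ^ (2 * n) = μ := by
    intro i
    simp only [hζ, mul_pow, hω, hμ]
    ring
  set u : Fin (2 * n) → ℂ := fun k => ∑ i ∈ S, c i * ζ i ^ (k : ℕ) with hu
  set v : Fin (2 * n) → ℂ := fun k => ∑ i ∈ Sᶜ, c i * ζ i ^ (k : ℕ) with hv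
  have hD := aux_lead_diss n C hnorm hdiss (Sum.elim u v) ?_
  · simp only [Sum.elim_inl, Sum.elim_inr] at hD
    obtain ⟨r1, hr1, hz1, he1⟩ := aux_cauchy Sᶜ c ζ hζinj.injOn
      (fun i hi => hpos i (Finset.mem_compl.mp hi))
    obtain ⟨r2, hr2, hz2, he2⟩ := aux_cauchy S c (fun i => -ζ i)
      (fun a _ b _ h => hζinj (neg_injective h))
      (fun i hi => by have := hneg i hi; simp only [Complex.neg_re]; linarith)
    have he2' : ∑ i ∈ S, ∑ l ∈ S, c i * (starRingEnd ℂ) (c l) / (ζ i + (starRingEnd ℂ) (ζ l))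
        = -(r2 : ℂ) := by
      rw [← he2, ← Finset.sum_neg_distrib]
      refine Finset.sum_congr rfl fun i _ => ?_
      rw [← Finset.sum_neg_distrib]
      refine Finset.sum_congr rfl fun l _ => ?_
      rw [map_neg, ← neg_add, div_neg, neg_neg]
    have q1 : qJ n v = _ := aux_qJ (n := n) Sᶜ c ζ μ (fun i _ => hζμ i) (by
      intro i hi l hl h
      have a := hpos i (Finset.mem_compl.mp hi)
      have b := hpos l (Finset.mem_compl.mp hl)
      have := congrArg Complex.re h
      rw [Complex.add_re, Complex.conj_re, Complex.zero_re] at this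
      simp only [hζ] at this
      linarith)
    have q2 : qJ n u = _ := aux_qJ (n := n) S c ζ μ (fun i _ => hζμ i) (by
      intro i hi l hl h
      have a := hneg i hi
      have b := hneg l hl
      have := congrArg Complex.re h
      rw [Complex.add_re, Complex.conj_re, Complex.zero_re] at this
      simp only [hζ] at this
      linarith)
    rw [q1, q2, he1, he2'] at hD
    have hD' : (0 : ℂ) ≤ (((-1) ^ n * (2 * μ.im) * (r1 + r2) : ℝ) : ℂ) := by
      convert hD using 1
      push_cast
      ring
    rw [Complex.zero_le_real] at hD'
    have hμim : μ.im = -(ρ ^ (2 * n)).im := by simp [hμ]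
    rw [hμim] at hD'
    have hle : r1 + r2 ≤ 0 := by
      by_contra hcon
      push Not at hcon
      have := mul_pos hsign hcon
      nlinarith
    apply hc0
    ext i
    by_cases hi : i ∈ S
    · exact hz2 (by linarith) i hi
    · exact hz1 (by linarith) i (Finset.mem_compl.mpr hi)
  · ext j
    have hlt := aux_order_lt C hnorm j
    simp only [Matrix.mulVec, dotProduct, Fintype.sum_sum_type, Pi.zero_apply, Sum.elim_inl,
      Sum.elim_inr]
    rw [← Finset.sum_add_distrib, Finset.sum_congr rfl fun k _ => aux_scaled_zero C hnorm j _ _ k]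
    rw [Finset.sum_eq_single (⟨rowOrder C j, hlt⟩ : Fin (2 * n))
      (fun b _ hb => if_neg fun h => hb (Fin.ext h)) (by simp)]
    rw [if_pos rfl]
    have hj := congrFun hc j
    simp only [Matrix.mulVec, dotProduct, Pi.zero_apply, Matrix.of_apply] at hj
    rw [← Finset.sum_add_sum_compl S] at hj
    have h1 : ∑ i ∈ S, (if i ∈ S then (leadingPair C j).1 else (leadingPair C j).2) *
        ω i ^ rowOrder C j * c i = ∑ i ∈ S, (leadingPair C j).1 * ω i ^ rowOrder C j * c i :=
      Finset.sum_congr rfl fun i hi => by rw [if_pos hi]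
    have h2 : ∑ i ∈ Sᶜ, (if i ∈ S then (leadingPair C j).1 else (leadingPair C j).2) *
        ω i ^ rowOrder C j * c i = ∑ i ∈ Sᶜ, (leadingPair C j).2 * ω i ^ rowOrder C j * c i :=
      Finset.sum_congr rfl fun i hi => by rw [if_neg (Finset.mem_compl.mp hi)]
    rw [h1, h2] at hj
    have := congrArg (fun z => ρ ^ rowOrder C j * z) hj
    simp only [mul_zero] at this
    rw [← this, hu, hv]
    simp only [hζ, mul_pow, Finset.mul_sum, mul_add]
    congr 1 <;>
    · refine Finset.sum_congr rfl fun i _ => ?_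
      ring

lemma aux_surj (n : ℕ) (hn : 1 ≤ n) (ω : Fin (2 * n) → ℂ) (hω : ∀ i, ω i ^ (2 * n) = -1)
    (hinj : Function.Injective ω) (z : ℂ) (hz : z ^ (2 * n) = -1) : ∃ i, ω i = z := by
  classical
  have hsub : Finset.univ.image ω ⊆ (Polynomial.nthRoots (2 * n) (-1 : ℂ)).toFinset := by
    intro y hy
    obtain ⟨i, -, rfl⟩ := Finset.mem_image.mp hy
    rw [Multiset.mem_toFinset, Polynomial.mem_nthRoots (by omega)]
    exact hω i
  have heq := Finset.eq_of_subset_of_card_le hsub (by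
    rw [Finset.card_image_of_injective _ hinj, Finset.card_fin]
    exact (Multiset.toFinset_card_le _).trans (Polynomial.card_nthRoots _ _))
  have hz' : z ∈ (Polynomial.nthRoots (2 * n) (-1 : ℂ)).toFinset := by
    rw [Multiset.mem_toFinset, Polynomial.mem_nthRoots (by omega)]
    exact hz
  rw [← heq] at hz'
  obtain ⟨i, -, hi⟩ := Finset.mem_image.mp hz'
  exact ⟨i, hi⟩

lemma aux_rev (n : ℕ) (hn : 1 ≤ n) (ω : Fin (2 * n) → ℂ) (hω : ∀ i, ω i ^ (2 * n) = -1) (ρ : ℂ)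
    (hmono : StrictMono fun i => (ω i * ρ).re) (i : Fin (2 * n)) : ω i.rev = -ω i := by
  have hinj : Function.Injective ω := fun a b h => hmono.injective (by simp only [h])
  have hex : ∀ i, ∃ l, ω l = -ω i := fun i => aux_surj n hn ω hω hinj _ (by
    rw [Even.neg_pow (even_two_mul n), hω])
  choose σ hσ using hex
  have hs : StrictMono fun i => (σ i).rev := by
    intro a b hab
    have h1 := hmono hab
    have h2 : σ b < σ a := by
      rw [← hmono.lt_iff_lt]
      simp only [hσ, neg_mul, Complex.neg_re] at h1 ⊢
      linarith
    exact Fin.rev_lt_rev.mpr h2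
  have h3 : (σ i).rev = i := hs.apply_eq
  have h4 : σ i = i.rev := by rw [← h3, Fin.rev_rev, h3]
  rw [← h4, hσ]

lemma aux_sin_lt (φ x : ℝ) (hφ : 0 < φ) (h1 : φ < x) (h2 : x < Real.pi - φ) :
    Real.sin φ < Real.sin x := by
  have h : Real.sin x - Real.sin φ = 2 * Real.sin ((x - φ) / 2) * Real.cos ((x + φ) / 2) :=
    Real.sin_sub_sin x φ
  have a : 0 < Real.sin ((x - φ) / 2) := Real.sin_pos_of_pos_of_lt_pi (by linarith) (by linarith)
  have b : 0 < Real.cos ((x + φ) / 2) :=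
    Real.cos_pos_of_mem_Ioo ⟨by linarith, by linarith⟩
  have : 0 < 2 * Real.sin ((x - φ) / 2) * Real.cos ((x + φ) / 2) := by positivity
  linarith

/-- the root structure for odd `n` -/
lemma aux_odd (n : ℕ) (hn : 1 ≤ n) (hodd : Odd n) (φ : ℝ) (hφ : 4 * n * φ = Real.pi) (z : ℂ)
    (hz : z ^ (2 * n) = -1) (hne : z ≠ Complex.I)
    (hneg : (z * Complex.exp (φ * Complex.I)).re < 0) :
    (z * Complex.exp (φ * Complex.I)).re < (Complex.I * Complex.exp (φ * Complex.I)).re ∧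
    (z * Complex.exp (-φ * Complex.I)).re < 0 := by
  have hn' : (1 : ℝ) ≤ n := by exact_mod_cast hn
  have hφ0 : 0 < φ := by
    have := Real.pi_pos
    by_contra h
    push Not at h
    nlinarith
  have hη : (-Complex.I * z) ^ (2 * n) = 1 := by
    rw [mul_pow, hz, Even.neg_pow (even_two_mul n), pow_mul, Complex.I_sq, hodd.neg_one_pow]
    norm_num
  have : NeZero (2 * n) := ⟨by omega⟩
  obtain ⟨a, ha, hz'⟩ :=
    (Complex.isPrimitiveRoot_exp (2 * n) (by omega)).eq_pow_of_pow_eq_one hη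
  have hzexp : z = Complex.I * Complex.exp (((4 * a * φ : ℝ) : ℂ) * Complex.I) := by
    have h1 : z = Complex.I * (-Complex.I * z) := by
      linear_combination z * Complex.I_sq
    rw [h1, ← hz', ← Complex.exp_nat_mul]
    congr 2
    have hnc : (n : ℂ) ≠ 0 := by exact_mod_cast (by omega : n ≠ 0)
    rw [← hφ]
    push_cast
    field_simp
  have key : ∀ t : ℝ, (z * Complex.exp (t * Complex.I)).re = -Real.sin (4 * a * φ + t) := by
    intro t
    rw [hzexp, mul_assoc, ← Complex.exp_add, ← add_mul, ← Complex.ofReal_add, Complex.I_mul_re,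
      Complex.exp_ofReal_mul_I_im]
  have keyI : (Complex.I * Complex.exp (φ * Complex.I)).re = -Real.sin φ := by
    rw [Complex.I_mul_re, Complex.exp_ofReal_mul_I_im]
  rw [key] at hneg
  have ha0 : a ≠ 0 := by
    rintro rfl
    apply hne
    rw [hzexp]
    simp
  have han : a < n := by
    by_contra hcon
    push Not at hcon
    have hA : (n : ℝ) ≤ a := by exact_mod_cast hcon
    have hB : (a : ℝ) + 1 ≤ 2 * n := by exact_mod_cast ha
    have : 0 ≤ Real.sin (4 * a * φ + φ - Real.pi) :=
      Real.sin_nonneg_of_nonneg_of_le_pi (by nlinarith) (by nlinarith)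
    rw [Real.sin_sub_pi] at this
    linarith
  have hA : (1 : ℝ) ≤ a := by exact_mod_cast Nat.one_le_iff_ne_zero.mpr ha0
  have hB : (a : ℝ) + 1 ≤ n := by exact_mod_cast han
  constructor
  · rw [key, keyI]
    have := aux_sin_lt φ (4 * a * φ + φ) hφ0 (by nlinarith) (by nlinarith)
    linarith
  · have h := key (-φ)
    push_cast at h
    rw [h]
    have : 0 < Real.sin (4 * a * φ + -φ) :=
      Real.sin_pos_of_pos_of_lt_pi (by nlinarith) (by nlinarith)
    linarith

lemma aux_det_expand {m : ℕ} (p q : Fin m) (hpq : p ≠ q) (A : Matrix (Fin m) (Fin m) ℂ)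
    (a b a' b' : Fin m → ℂ) (s : ℂ) (hs : s ≠ 0) :
    s * ((A.updateCol p (a + s • b)).updateCol q (a' + s⁻¹ • b')).det =
      ((A.updateCol p a).updateCol q b').det +
      (((A.updateCol p a).updateCol q a').det + ((A.updateCol p b).updateCol q b').det) * s +
      ((A.updateCol p b).updateCol q a').det * s ^ 2 := by
  have h : ∀ y : Fin m → ℂ, ((A.updateCol p (a + s • b)).updateCol q y).det =
      ((A.updateCol p a).updateCol q y).det + s * ((A.updateCol p b).updateCol q y).det := by
    intro y
    rw [Matrix.updateCol_comm _ hpq, Matrix.det_updateCol_add, Matrix.det_updateCol_smul,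
      Matrix.updateCol_comm _ hpq.symm, Matrix.updateCol_comm _ hpq.symm]
  rw [Matrix.det_updateCol_add, Matrix.det_updateCol_smul, h, h]
  field_simp
  ring

theorem stmt18 (n : ℕ) (hn : 1 ≤ n)
    (C : Matrix (Fin (2 * n)) (Fin (2 * n) ⊕ Fin (2 * n)) ℂ)
    (hrank : C.rank = 2 * n) (hnorm : IsNormalized C) (hdiss : IsDissipativeBC n C)
    (hsorted : ∀ j j' : Fin (2 * n), j ≤ j' → rowOrder C j' ≤ rowOrder C j)
    (ω : Fin (2 * n) → ℂ) (hω : ∀ i, ω i ^ (2 * n) = -1)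
    (hmono : StrictMono fun i =>
      (ω i * Complex.exp ((Real.pi : ℂ) * Complex.I / (4 * (n : ℂ)))).re) :
    ∃ θm1 θ0 θ1 : ℂ,
      (∀ s : ℂ, s ≠ 0 →
        s * (Matrix.of fun j i : Fin (2 * n) =>
          (if (i : ℕ) < n - 1 then (leadingPair C j).1
           else if (i : ℕ) = n - 1 then (leadingPair C j).1 + s * (leadingPair C j).2
           else if (i : ℕ) = n then (leadingPair C j).1 + s⁻¹ * (leadingPair C j).2
           else (leadingPair C j).2) * ω i ^ rowOrder C j).det
          = θm1 + θ0 * s + θ1 * s ^ 2)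
      ∧ (θm1 ≠ 0 ∨ θ1 ≠ 0) := by
  classical
  have hinj : Function.Injective ω := fun a b h => hmono.injective (by simp only [h])
  let p : Fin (2 * n) := ⟨n - 1, by omega⟩
  let q : Fin (2 * n) := ⟨n, by omega⟩
  have hpq : p ≠ q := by
    intro h
    have := congrArg Fin.val h
    simp only [p, q] at this
    omega
  let A : Matrix (Fin (2 * n)) (Fin (2 * n)) ℂ := Matrix.of fun j i =>
    (if (i : ℕ) < n - 1 then (leadingPair C j).1 else (leadingPair C j).2) * ω i ^ rowOrder C j
  let a : Fin (2 * n) → ℂ := fun j => (leadingPair C j).1 * ω p ^ rowOrder C j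
  let b : Fin (2 * n) → ℂ := fun j => (leadingPair C j).2 * ω p ^ rowOrder C j
  let a' : Fin (2 * n) → ℂ := fun j => (leadingPair C j).1 * ω q ^ rowOrder C j
  let b' : Fin (2 * n) → ℂ := fun j => (leadingPair C j).2 * ω q ^ rowOrder C j
  have hqi : ∀ i : Fin (2 * n), i = q ↔ (i : ℕ) = n := fun i => Fin.ext_iff
  have hpi : ∀ i : Fin (2 * n), i = p ↔ (i : ℕ) = n - 1 := fun i => Fin.ext_iff
  refine ⟨((A.updateCol p a).updateCol q b').det,
    ((A.updateCol p a).updateCol q a').det + ((A.updateCol p b).updateCol q b').det,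
    ((A.updateCol p b).updateCol q a').det, ?_, ?_⟩
  · intro s hs
    rw [← aux_det_expand p q hpq A a b a' b' s hs]
    congr 2
    ext j i
    by_cases h1 : i = q
    · subst h1
      simp only [Matrix.of_apply, Matrix.updateCol_self, Pi.add_apply, Pi.smul_apply, smul_eq_mul,
        a', b']
      rw [if_neg (by simp only [q]; omega), if_neg (by simp only [q]; omega),
        if_pos (by simp only [q])]
      ring
    · by_cases h2 : i = p
      · subst h2
        rw [Matrix.updateCol_ne hpq, Matrix.updateCol_self]
        simp only [Matrix.of_apply, Pi.add_apply, Pi.smul_apply, smul_eq_mul, a, b]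
        rw [if_neg (by simp only [p]; omega), if_pos (by simp only [p])]
        ring
      · rw [Matrix.updateCol_ne h1, Matrix.updateCol_ne h2]
        rw [hqi] at h1
        rw [hpi] at h2
        simp only [Matrix.of_apply, A, h1, h2, if_false]
  · set φ : ℝ := Real.pi / (4 * n) with hφdef
    have hn' : (1 : ℝ) ≤ n := by exact_mod_cast hn
    have hφ : 4 * n * φ = Real.pi := by
      rw [hφdef]; field_simp
    have hexp : Complex.exp ((Real.pi : ℂ) * Complex.I / (4 * (n : ℂ)))
        = Complex.exp (φ * Complex.I) := by
      congr 1
      rw [hφdef]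
      push_cast
      ring
    rw [hexp] at hmono
    have hrev := aux_rev n hn ω hω _ hmono
    have hrev_lt : ∀ i : Fin (2 * n), (i : ℕ) < n → i < i.rev := by
      intro i hi
      rw [Fin.lt_def, Fin.val_rev]
      omega
    have hflt : ∀ i : Fin (2 * n), (i : ℕ) < n → (ω i * Complex.exp (φ * Complex.I)).re < 0 := by
      intro i hi
      have := hmono (hrev_lt i hi)
      simp only [hrev, neg_mul, Complex.neg_re] at this
      linarith
    have hpow : ∀ t : ℝ, Complex.exp (t * Complex.I) ^ (2 * n) =
        Complex.exp (((2 * n * t : ℝ) : ℂ) * Complex.I) := by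
      intro t
      rw [← Complex.exp_nat_mul]
      congr 1
      push_cast
      ring
    rcases Nat.even_or_odd n with heven | hodd
    · left
      have hcore := aux_core n C hnorm hdiss ω hω hinj (Complex.exp (φ * Complex.I))
        (Finset.univ.filter fun i => (i : ℕ) < n)
        (fun i hi => hflt i (by simpa using hi))
        (fun i hi => by
          have hi' : ¬ (i : ℕ) < n := by simpa using hi
          have := hflt i.rev (by rw [Fin.val_rev]; omega)
          rw [hrev, neg_mul, Complex.neg_re] at this
          linarith)
        (by
          rw [heven.neg_one_pow, hpow, Complex.exp_ofReal_mul_I_im,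
            show 2 * n * φ = Real.pi / 2 by linarith, Real.sin_pi_div_two]
          norm_num)
      convert hcore using 2
      ext j i
      by_cases h1 : i = q
      · subst h1
        simp [b', q]
      · by_cases h2 : i = p
        · subst h2
          rw [Matrix.updateCol_ne hpq, Matrix.updateCol_self]
          simp only [Matrix.of_apply, a]
          rw [if_pos (by simp [p]; omega)]
        · rw [Matrix.updateCol_ne h1, Matrix.updateCol_ne h2]
          rw [hqi] at h1
          rw [hpi] at h2
          simp only [Matrix.of_apply, A, Finset.mem_filter, Finset.mem_univ, true_and]
          have : (i : ℕ) < n - 1 ↔ (i : ℕ) < n := by omega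
          simp only [this]
    · right
      obtain ⟨i0, hi0⟩ := aux_surj n hn ω hω hinj Complex.I (by
        rw [pow_mul, Complex.I_sq, hodd.neg_one_pow])
      have hφ0 : 0 < φ := by rw [hφdef]; have := Real.pi_pos; positivity
      have hsin : 0 < Real.sin φ := Real.sin_pos_of_pos_of_lt_pi hφ0 (by nlinarith)
      have hi0n : (i0 : ℕ) < n := by
        by_contra hcon
        have := hflt i0.rev (by rw [Fin.val_rev]; omega)
        rw [hrev, hi0, neg_mul, Complex.neg_re, Complex.I_mul_re,
          Complex.exp_ofReal_mul_I_im] at this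
        linarith
      have hodd' : ∀ i : Fin (2 * n), (i : ℕ) < n → i ≠ i0 → i < i0 ∧
          (ω i * Complex.exp (-φ * Complex.I)).re < 0 := by
        intro i hi hne
        have h := aux_odd n hn hodd φ hφ (ω i) (hω i)
          (fun h => hne (hinj (h.trans hi0.symm))) (hflt i hi)
        refine ⟨?_, h.2⟩
        rw [← hmono.lt_iff_lt]
        simp only [hi0]
        exact h.1
      have hi0p : i0 = p := by
        by_contra hne
        have := (hodd' p (by simp only [p]; omega) (Ne.symm hne)).1
        rw [Fin.lt_def] at this
        simp only [p] at this
        omega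
      have hneg1 : ∀ i : Fin (2 * n), (i : ℕ) < n - 1 →
          (ω i * Complex.exp (-φ * Complex.I)).re < 0 := by
        intro i hi
        refine (hodd' i (by omega) ?_).2
        rw [hi0p, Ne, hpi]
        omega
      have hposp : 0 < (ω p * Complex.exp (-φ * Complex.I)).re := by
        rw [← hi0p, hi0, Complex.I_mul_re, ← Complex.ofReal_neg, Complex.exp_ofReal_mul_I_im,
          Real.sin_neg]
        linarith
      have hprev : q.rev = p := by
        apply Fin.ext
        rw [Fin.val_rev]
        simp only [p, q]
        omega
      have hcore := aux_core n C hnorm hdiss ω hω hinj (Complex.exp (-φ * Complex.I))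
        (Finset.univ.filter fun i => (i : ℕ) < n - 1 ∨ (i : ℕ) = n)
        (fun i hi => by
          have hi' : (i : ℕ) < n - 1 ∨ (i : ℕ) = n := by simpa using hi
          rcases hi' with h | h
          · exact hneg1 i h
          · rw [← hqi] at h
            subst h
            rw [← hprev, hrev, neg_mul, Complex.neg_re] at hposp
            linarith)
        (fun i hi => by
          have hi' : ¬ ((i : ℕ) < n - 1 ∨ (i : ℕ) = n) := by simpa using hi
          by_cases h : i = p
          · rw [h]; exact hposp
          · rw [hpi] at h
            have := hneg1 i.rev (by rw [Fin.val_rev]; omega)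
            rw [hrev, neg_mul, Complex.neg_re] at this
            linarith)
        (by
          rw [← Complex.ofReal_neg, hodd.neg_one_pow, hpow, Complex.exp_ofReal_mul_I_im,
            show 2 * n * -φ = -(Real.pi / 2) by linarith, Real.sin_neg, Real.sin_pi_div_two]
          norm_num)
      convert hcore using 2
      ext j i
      by_cases h1 : i = q
      · subst h1
        simp [a', q]
      · by_cases h2 : i = p
        · subst h2
          rw [Matrix.updateCol_ne hpq, Matrix.updateCol_self]
          simp only [Matrix.of_apply, b]
          rw [if_neg (by simp [p]; omega)]
        · rw [Matrix.updateCol_ne h1, Matrix.updateCol_ne h2]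
          rw [hqi] at h1
          rw [hpi] at h2
          simp only [Matrix.of_apply, A, Finset.mem_filter, Finset.mem_univ, true_and, h1, or_false]
end
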